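/- Let F : [0,∞) → [0,∞). If F∘Λ is a Pólya frequency function for every Pólya frequency function Λ, then there exists c > 0 such that F(x) = c·x for all x ≥ 0. Conversely, every dilation F(x) = c·x with c > 0 maps Pólya frequency functions to Pólya frequency functions. -/

import Mathlib

/-- A kernel on linearly ordered sets is totally non-negative if all matrices
obtained by evaluating it on increasing tuples have non-negative determinant. -/
def IsTNKernel {X Y : Type*} [LinearOrder X] [LinearOrder Y] (K : X → Y → ℝ) : Prop :=
  ∀ (n : ℕ) (x : Fin n → X) (y : Fin n → Y), StrictMono x → StrictMono y →
    0 ≤ (Matrix.of fun i j : Fin n => K (x i) (y j)).det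

/-- A Pólya frequency function: a Lebesgue-integrable function `ℝ → [0,∞)`,
non-zero at two or more points, whose associated Toeplitz kernel is totally
non-negative. -/
def IsPolyaFrequencyFunction (Λ : ℝ → ℝ) : Prop :=
  MeasureTheory.Integrable Λ ∧ (∀ x, 0 ≤ Λ x) ∧
  (∃ a b : ℝ, a ≠ b ∧ Λ a ≠ 0 ∧ Λ b ≠ 0) ∧
  IsTNKernel fun x y : ℝ => Λ (x - y)

/-!
Composing with the one-sided exponential `t * exp (-x)` on `[0, ∞)` and letting two nodes of a
`3 × 3` minor merge at the jump turns total non-negativity into a multiplicative Cauchy equation, so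
a preserver is a power `F x = C * x ^ α` for `x > 0`.

The exponent is found by perturbing the constant kernel: for the probes equal to `1 - q * exp (-x)`
on `[0, ∞)`, the `n × n` minors of the `α`-th power are, to leading order in `q`, a positive
multiple of `∏ k < n, Ring.choose α k`. Hence `α ^ 2 * (α - 1) ≥ 0` for `n = 3`. In a `4 × 4` minor
with just the corner entry on the other side of the kink, the leading term is the `3 × 3` minor
opposite to the corner with the sign `(-1) ^ 3`, which gives the reverse inequality.
-/

open MeasureTheory Matrix Set Filter Topology

theorem sum_sum_sign_mul_sign_mul_prod {ι R : Type*} [Fintype ι] [DecidableEq ι] [CommRing R]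
    (A : Matrix ι ι R) :
    ∑ σ : Equiv.Perm ι, ∑ τ : Equiv.Perm ι,
        (Equiv.Perm.sign σ * Equiv.Perm.sign τ : R) * ∏ k, A (σ k) (τ k) =
      (Fintype.card ι).factorial * A.det := by
  have hrow (σ : Equiv.Perm ι) : ∑ τ : Equiv.Perm ι, (Equiv.Perm.sign τ : R) *
      ∏ k, A (σ k) (τ k) = Equiv.Perm.sign σ * A.det := by
    rw [← det_permute, ← det_transpose, det_apply']
    rfl
  have hsign (σ : Equiv.Perm ι) : (Equiv.Perm.sign σ * Equiv.Perm.sign σ : R) = 1 := by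
    norm_cast
    simp
  simp_rw [mul_assoc, ← Finset.mul_sum, hrow, ← mul_assoc, hsign, one_mul, Finset.sum_const,
    Finset.card_univ, Fintype.card_perm, nsmul_eq_mul]

-- Andréief's identity, the continuous Cauchy–Binet formula.
theorem integral_det_mul_det {ι T : Type*} [Fintype ι] [DecidableEq ι] [MeasurableSpace T]
    {μ : Measure T} [SigmaFinite μ] {f g : ι → T → ℝ}
    (hfg : ∀ i j, Integrable (fun t => f i t * g j t) μ) :
    ∫ t : ι → T, (of fun i j => f i (t j)).det * (of fun i j => g i (t j)).det
        ∂Measure.pi (fun _ => μ) =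
      (Fintype.card ι).factorial * (of fun i j => ∫ t, f i t * g j t ∂μ).det := by
  set A : Matrix ι ι ℝ := of fun i j => ∫ t, f i t * g j t ∂μ
  have hprod (σ τ : Equiv.Perm ι) : Integrable (fun t : ι → T =>
      (Equiv.Perm.sign σ * Equiv.Perm.sign τ : ℝ) * ∏ k, f (σ k) (t k) * g (τ k) (t k))
      (Measure.pi fun _ => μ) :=
    (Integrable.fintype_prod fun k => hfg (σ k) (τ k)).const_mul _
  calc
    _ = ∫ t : ι → T, ∑ σ : Equiv.Perm ι, ∑ τ : Equiv.Perm ι,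
          (Equiv.Perm.sign σ * Equiv.Perm.sign τ : ℝ) * ∏ k, f (σ k) (t k) * g (τ k) (t k)
          ∂Measure.pi fun _ => μ := by
      simp_rw [det_apply', of_apply, Finset.sum_mul_sum, Finset.prod_mul_distrib, mul_mul_mul_comm]
    _ = ∑ σ : Equiv.Perm ι, ∑ τ : Equiv.Perm ι,
          (Equiv.Perm.sign σ * Equiv.Perm.sign τ : ℝ) * ∏ k, A (σ k) (τ k) := by
      rw [integral_finsetSum _ fun σ _ => integrable_finsetSum _ fun τ _ => hprod σ τ]
      refine Finset.sum_congr rfl fun σ _ => ?_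
      rw [integral_finsetSum _ fun τ _ => hprod σ τ]
      refine Finset.sum_congr rfl fun τ _ => ?_
      rw [integral_const_mul, integral_fintype_prod_eq_prod fun k t => f (σ k) t * g (τ k) t]
      rfl
    _ = (Fintype.card ι).factorial * A.det :=
      sum_sum_sign_mul_sign_mul_prod A

theorem isTNKernel_indicator_le {X : Type*} [LinearOrder X] :
    IsTNKernel fun x y : X => if y ≤ x then (1 : ℝ) else 0 := by
  intro n
  induction n with
  | zero => simp
  | succ n ih =>
    intro x y hx hy
    rcases lt_or_ge (x 0) (y 0) with hlt | hle
    · rw [det_eq_zero_of_row_eq_zero 0]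
      exact fun j => if_neg (hlt.trans_le (hy.monotone (Fin.zero_le j))).not_ge
    have hcol (i : Fin (n + 1)) : y 0 ≤ x i := hle.trans (hx.monotone (Fin.zero_le i))
    by_cases hrow : ∀ j : Fin n, x 0 < y j.succ
    · rw [det_succ_row_zero, Finset.sum_eq_single 0]
      · simpa [hcol, submatrix] using
          ih _ _ (hx.comp Fin.strictMono_succ) (hy.comp Fin.strictMono_succ)
      · intro j _ hj
        obtain ⟨j, rfl⟩ := Fin.exists_succ_eq.2 hj
        simp [(hrow j).not_ge]
      · simp
    · push Not at hrow
      obtain ⟨j, hj⟩ := hrow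
      rw [det_zero_of_column_eq (Fin.succ_ne_zero j).symm]
      intro i
      simp [hcol, hj.trans (hx.monotone (Fin.zero_le i))]

namespace IsTNKernel

variable {X Y : Type*} [LinearOrder X] [LinearOrder Y] {K : X → Y → ℝ}

theorem swap (hK : IsTNKernel K) : IsTNKernel fun y x => K x y := fun n y x hy hx => by
  rw [← det_transpose]
  exact hK n x y hx hy

theorem mul_mul {r : X → ℝ} {s : Y → ℝ} (hK : IsTNKernel K) (hr : ∀ x, 0 ≤ r x)
    (hs : ∀ y, 0 ≤ s y) : IsTNKernel fun x y => r x * s y * K x y := fun n x y hx hy => by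
  calc
    0 ≤ (∏ i, r (x i)) * ((∏ j, s (y j)) * (of fun i j => K (x i) (y j)).det) :=
      mul_nonneg (Finset.prod_nonneg fun i _ => hr _)
        (mul_nonneg (Finset.prod_nonneg fun j _ => hs _) (hK n x y hx hy))
    _ = _ := by
      rw [← det_mul_row, ← det_mul_column]
      simp only [of_apply, mul_assoc]

theorem det_mul_det_nonneg {T : Type*} [LinearOrder T] {K : X → T → ℝ} {L : T → Y → ℝ}
    (hK : IsTNKernel K) (hL : IsTNKernel L) {n : ℕ} {x : Fin n → X} {y : Fin n → Y}
    (hx : StrictMono x) (hy : StrictMono y) (t : Fin n → T) :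
    0 ≤ (of fun i j => K (x i) (t j)).det * (of fun i j => L (t j) (y i)).det := by
  by_cases ht : Function.Injective t
  · have hmono : StrictMono (t ∘ Tuple.sort t) :=
      (Tuple.monotone_sort t).strictMono_of_injective (ht.comp (Tuple.sort t).injective)
    have hKt : 0 ≤ ((of fun i j => K (x i) (t j)).submatrix id (Tuple.sort t)).det :=
      hK n x _ hx hmono
    have hLt : 0 ≤ ((of fun i j => L (t j) (y i)).submatrix id (Tuple.sort t)).det :=
      hL.swap n y _ hy hmono
    have hsign : (Equiv.Perm.sign (Tuple.sort t) * Equiv.Perm.sign (Tuple.sort t) : ℝ) = 1 := by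
      norm_cast
      simp
    have hmul := mul_nonneg hKt hLt
    rwa [det_permute', det_permute', mul_mul_mul_comm, hsign, one_mul] at hmul
  · obtain ⟨j, k, hjk, hne⟩ := Function.not_injective_iff.1 ht
    rw [det_zero_of_column_eq hne (by simp [hjk]), zero_mul]

theorem integral_mul {T : Type*} [LinearOrder T] [MeasurableSpace T] {μ : Measure T}
    [SigmaFinite μ] {K : X → T → ℝ} {L : T → Y → ℝ} (hK : IsTNKernel K) (hL : IsTNKernel L)
    (hKL : ∀ x y, Integrable (fun t => K x t * L t y) μ) :
    IsTNKernel fun x y => ∫ t, K x t * L t y ∂μ := fun n x y hx hy => by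
  have hnonneg := integral_nonneg_of_ae (μ := Measure.pi fun _ => μ)
    (ae_of_all _ (det_mul_det_nonneg hK hL hx hy))
  rw [integral_det_mul_det (f := fun i => K (x i)) (g := fun j t => L t (y j))
    fun i j => hKL (x i) (y j)] at hnonneg
  exact nonneg_of_mul_nonneg_right hnonneg (by positivity)

theorem setIntegral_Iic {T : Type*} [LinearOrder T] [TopologicalSpace T] [OrderClosedTopology T]
    [MeasurableSpace T] [OpensMeasurableSpace T] {μ : Measure T} [SigmaFinite μ] {L : T → Y → ℝ}
    (hL : IsTNKernel L) (hint : ∀ x y, IntegrableOn (L · y) (Iic x) μ) :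
    IsTNKernel fun x y => ∫ t in Iic x, L t y ∂μ := by
  have hind (x : T) (y : Y) : (fun t => (if t ≤ x then (1 : ℝ) else 0) * L t y) =
      (Iic x).indicator (L · y) := by
    ext t
    simp [indicator_apply]
  have hKL := isTNKernel_indicator_le.integral_mul (μ := μ) hL fun x y => by
    rw [hind, integrable_indicator_iff measurableSet_Iic]
    exact hint x y
  simpa only [hind, integral_indicator measurableSet_Iic] using hKL

end IsTNKernel

theorem isTNKernel_exp_mul_min {b : ℝ} (hb : 0 < b) :
    IsTNKernel fun x y : ℝ => Real.exp (b * min x y) := by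
  have hind (y : ℝ) : (fun t => Real.exp (b * t) * 1 * if t ≤ y then (1 : ℝ) else 0) =
      (Iic y).indicator fun t => Real.exp (b * t) := by
    ext t
    simp [indicator_apply]
  have hL : IsTNKernel fun t y : ℝ => Real.exp (b * t) * 1 * if t ≤ y then (1 : ℝ) else 0 :=
    isTNKernel_indicator_le.swap.mul_mul (fun _ => (Real.exp_pos _).le) fun _ => zero_le_one
  have hint := (hL.setIntegral_Iic fun x y => by
    rw [hind]
    exact (integrableOn_exp_mul_Iic hb x).indicator measurableSet_Iic).mul_mul
      (fun _ => hb.le) fun _ => zero_le_one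
  convert hint using 3 with x y
  rw [hind, setIntegral_indicator measurableSet_Iic, Iic_inter_Iic, integral_exp_mul_Iic hb]
  field_simp

theorem setIntegral_Iic_exp_mul_exp_mul_min {b : ℝ} (hb : 0 < b) (x y : ℝ) :
    IntegrableOn (fun t => Real.exp t * Real.exp (b * min t y)) (Iic x) ∧
    ∫ t in Iic x, Real.exp t * Real.exp (b * min t y) =
      Real.exp ((1 + b) * min x y) / (1 + b) +
        Real.exp (b * y) * (Real.exp x - Real.exp (min x y)) := by
  have hb1 : 0 < 1 + b := by linarith
  have hint (x : ℝ) :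
      IntegrableOn (fun t => Real.exp t * Real.exp (b * min t y)) (Iic x) := by
    refine (integrableOn_exp_Iic x).mul_bdd (c := Real.exp (b * y))
      (Continuous.aestronglyMeasurable (by fun_prop)) (ae_of_all _ fun t => ?_)
    rw [Real.norm_eq_abs, Real.abs_exp, Real.exp_le_exp]
    exact mul_le_mul_of_nonneg_left (min_le_right t y) hb.le
  have hle {x : ℝ} (hx : x ≤ y) : ∫ t in Iic x, Real.exp t * Real.exp (b * min t y) =
      Real.exp ((1 + b) * x) / (1 + b) := by
    rw [← integral_exp_mul_Iic hb1]
    refine setIntegral_congr_fun measurableSet_Iic fun t ht => ?_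
    simp only [min_eq_left (ht.trans hx), ← Real.exp_add]
    ring_nf
  refine ⟨hint x, ?_⟩
  rcases le_total x y with hxy | hyx
  · simp [hle hxy, hxy]
  · have htail : ∫ t in y..x, Real.exp t * Real.exp (b * min t y) =
        Real.exp (b * y) * (Real.exp x - Real.exp y) := by
      rw [← integral_exp, ← intervalIntegral.integral_const_mul]
      refine intervalIntegral.integral_congr fun t ht => ?_
      rw [uIcc_of_le hyx] at ht
      simp only [min_eq_right ht.1, mul_comm]
    rw [min_eq_right hyx, ← htail, ← hle le_rfl,
      ← intervalIntegral.integral_Iic_sub_Iic (hint y) (hint x)]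
    ring

/-- The test functions that pin down the exponent of a power preserver: the perturbation
`1 - q * exp (-x)` of the constant `1` on `[0, ∞)`, continued by `(1 - q) * exp (q / (1 - q) * x)`
on `(-∞, 0]`. The two pieces are encoded in one formula through `max x 0` and `min x 0`.
Multiplication by `exp (-(q / (1 - q) / 2) * x)` makes them Pólya frequency functions for
`0 < q < 1`. -/
noncomputable def expProbe (q x : ℝ) : ℝ :=
  (1 - q * Real.exp (-max x 0)) * Real.exp (q / (1 - q) * min x 0)

theorem expProbe_of_nonneg {q x : ℝ} (hx : 0 ≤ x) : expProbe q x = 1 - q * Real.exp (-x) := by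
  simp [expProbe, hx]

theorem expProbe_of_nonpos {q x : ℝ} (hx : x ≤ 0) :
    expProbe q x = (1 - q) * Real.exp (q / (1 - q) * x) := by
  simp [expProbe, hx]

theorem expProbe_pos {q : ℝ} (hq : q ∈ Ioo 0 1) (x : ℝ) : 0 < expProbe q x := by
  have hexp : Real.exp (-max x 0) ≤ 1 := by simp
  have : 0 < 1 - q * Real.exp (-max x 0) := by nlinarith [hq.1, hq.2]
  exact mul_pos this (Real.exp_pos _)

theorem continuous_expProbe (q : ℝ) : Continuous (expProbe q) := by
  unfold expProbe
  fun_prop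

theorem isTNKernel_expProbe {q : ℝ} (hq : q ∈ Ioo 0 1) :
    IsTNKernel fun x y : ℝ => expProbe q (x - y) := by
  obtain ⟨hq0, hq1⟩ := hq
  set b := q / (1 - q) with hb_def
  have hb : 0 < b := div_pos hq0 (sub_pos.2 hq1)
  have hconv : IsTNKernel fun x y : ℝ => ∫ t in Iic x, Real.exp t * Real.exp (b * min t y) := by
    have hL := (isTNKernel_exp_mul_min hb).mul_mul (fun t => (Real.exp_pos t).le)
      fun _ => zero_le_one
    simp only [mul_one] at hL
    exact hL.setIntegral_Iic fun x y => (setIntegral_Iic_exp_mul_exp_mul_min hb x y).1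
  convert hconv.mul_mul (fun x => (Real.exp_pos (-x)).le)
    fun y => (Real.exp_pos (-(b * y))).le using 3 with x y
  have hqb : (1 + b)⁻¹ = 1 - q := by
    have : 1 - q ≠ 0 := (sub_pos.2 hq1).ne'
    rw [hb_def]
    field_simp
    ring
  rw [(setIntegral_Iic_exp_mul_exp_mul_min hb x y).2, div_eq_mul_inv, hqb]
  rcases le_total x y with hxy | hyx
  · rw [expProbe_of_nonpos (sub_nonpos.2 hxy), min_eq_left hxy, sub_self, mul_zero, add_zero,
      ← hb_def, ← Real.exp_add, ← mul_assoc, ← Real.exp_add, mul_comm]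
    ring_nf
  · rw [expProbe_of_nonneg (sub_nonneg.2 hyx), min_eq_right hyx]
    have hx : Real.exp (-x) * Real.exp x = 1 := by simp [← Real.exp_add]
    have hy : Real.exp (-(b * y)) * Real.exp (b * y) = 1 := by simp [← Real.exp_add]
    rw [neg_sub, sub_eq_add_neg y x, Real.exp_add, one_add_mul, Real.exp_add]
    linear_combination (-Real.exp (-(b * y)) * Real.exp (b * y)) * hx +
      (-1 + q * Real.exp (-x) * Real.exp y) * hy

theorem integrable_exp_neg_mul_abs {c : ℝ} (hc : 0 < c) :
    Integrable fun x : ℝ => Real.exp (-c * |x|) := by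
  rw [← integrableOn_univ, ← Iic_union_Ioi (a := (0 : ℝ))]
  refine IntegrableOn.union ?_ ?_
  · refine (integrableOn_exp_mul_Iic hc 0).congr_fun (fun x hx => ?_) measurableSet_Iic
    simp [abs_of_nonpos (mem_Iic.1 hx)]
  · refine (integrableOn_exp_mul_Ioi (neg_lt_zero.2 hc) 0).congr_fun (fun x hx => ?_)
      measurableSet_Ioi
    simp [abs_of_pos (mem_Ioi.1 hx)]

namespace IsTNKernel

theorem exp_mul_mul {g : ℝ → ℝ} (hg : IsTNKernel fun x y : ℝ => g (x - y)) {c : ℝ} (hc : 0 ≤ c)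
    (a : ℝ) : IsTNKernel fun x y : ℝ => c * Real.exp (a * (x - y)) * g (x - y) := by
  convert hg.mul_mul (fun x => mul_nonneg hc (Real.exp_pos (a * x)).le)
    fun y => (Real.exp_pos (-(a * y))).le using 4 with x y
  rw [mul_assoc, ← Real.exp_add]
  ring_nf

end IsTNKernel

namespace IsPolyaFrequencyFunction

theorem const_mul {Λ : ℝ → ℝ} (hΛ : IsPolyaFrequencyFunction Λ) {c : ℝ} (hc : 0 < c) :
    IsPolyaFrequencyFunction fun x => c * Λ x := by
  obtain ⟨hint, hnonneg, ⟨a, b, hab, ha, hb⟩, hTN⟩ := hΛ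
  refine ⟨hint.const_mul c, fun x => mul_nonneg hc.le (hnonneg x),
    ⟨a, b, hab, mul_ne_zero hc.ne' ha, mul_ne_zero hc.ne' hb⟩, ?_⟩
  simpa using hTN.exp_mul_mul hc.le 0

end IsPolyaFrequencyFunction

theorem isPolyaFrequencyFunction_exp_neg_abs :
    IsPolyaFrequencyFunction fun x => Real.exp (-|x|) := by
  refine ⟨by simpa using integrable_exp_neg_mul_abs one_pos, fun x => (Real.exp_pos _).le,
    ⟨0, 1, zero_ne_one, (Real.exp_pos _).ne', (Real.exp_pos _).ne'⟩, ?_⟩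
  convert (isTNKernel_exp_mul_min two_pos).mul_mul (fun x => (Real.exp_pos (-x)).le)
    fun y => (Real.exp_pos (-y)).le using 3 with x y
  simp only [← Real.exp_add]
  rcases le_total x y with hxy | hyx
  · rw [abs_of_nonpos (sub_nonpos.2 hxy), min_eq_left hxy]
    ring_nf
  · rw [abs_of_nonneg (sub_nonneg.2 hyx), min_eq_right hyx]
    ring_nf

theorem isPolyaFrequencyFunction_exp_neg_of_nonneg :
    IsPolyaFrequencyFunction fun x => if 0 ≤ x then Real.exp (-x) else 0 := by
  have hint : IntegrableOn (fun x => Real.exp (-x)) (Ici 0) := by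
    rw [integrableOn_Ici_iff_integrableOn_Ioi]
    exact integrableOn_exp_neg_Ioi 0
  refine ⟨?_, fun x => ?_, ⟨0, 1, zero_ne_one, by simp, by simp⟩, ?_⟩
  · exact ((integrable_indicator_iff measurableSet_Ici).2 hint).congr
      (ae_of_all _ fun x => by simp only [indicator_apply, mem_Ici])
  · dsimp only
    split_ifs <;> positivity
  · have hstep : IsTNKernel fun x y : ℝ => if 0 ≤ x - y then (1 : ℝ) else 0 := by
      simpa only [sub_nonneg] using isTNKernel_indicator_le (X := ℝ)
    simpa using hstep.exp_mul_mul (g := fun u => if 0 ≤ u then 1 else 0) zero_le_one (-1)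

theorem isPolyaFrequencyFunction_exp_mul_expProbe {q : ℝ} (hq : q ∈ Ioo 0 1) :
    IsPolyaFrequencyFunction fun x => Real.exp (-(q / (1 - q) / 2) * x) * expProbe q x := by
  have hpos (x : ℝ) : 0 < Real.exp (-(q / (1 - q) / 2) * x) * expProbe q x :=
    mul_pos (Real.exp_pos _) (expProbe_pos hq x)
  have hb : 0 < q / (1 - q) / 2 := half_pos (div_pos hq.1 (sub_pos.2 hq.2))
  refine ⟨?_, fun x => (hpos x).le, ⟨0, 1, zero_ne_one, (hpos 0).ne', (hpos 1).ne'⟩, ?_⟩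
  · have hcont := continuous_expProbe q
    refine (integrable_exp_neg_mul_abs hb).mono'
      (Continuous.aestronglyMeasurable (by fun_prop)) (ae_of_all _ fun x => ?_)
    rw [Real.norm_eq_abs, abs_of_pos (hpos x)]
    rcases le_total 0 x with hx | hx
    · rw [expProbe_of_nonneg hx, abs_of_nonneg hx]
      exact mul_le_of_le_one_right (Real.exp_pos _).le
        (sub_le_self _ (mul_nonneg hq.1.le (Real.exp_pos _).le))
    · rw [expProbe_of_nonpos hx, abs_of_nonpos hx, mul_left_comm, ← Real.exp_add]
      refine (mul_le_of_le_one_left (Real.exp_pos _).le (sub_le_self _ hq.1.le)).trans_eq ?_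
      ring_nf
  · simpa using (isTNKernel_expProbe hq).exp_mul_mul zero_le_one (-(q / (1 - q) / 2))

theorem IsTNKernel.mul_le_mul {X Y : Type*} [LinearOrder X] [LinearOrder Y] {K : X → Y → ℝ}
    (hK : IsTNKernel K) {x₁ x₂ : X} {y₁ y₂ : Y} (hx : x₁ < x₂) (hy : y₁ < y₂) :
    K x₁ y₂ * K x₂ y₁ ≤ K x₁ y₁ * K x₂ y₂ := by
  have hdet := hK 2 ![x₁, x₂] ![y₁, y₂] (by simpa [Fin.strictMono_iff_lt_succ] using hx)
    (by simpa [Fin.strictMono_iff_lt_succ] using hy)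
  simpa [det_fin_two, sub_nonneg] using hdet

section JumpKernel

variable {g : ℝ → ℝ} (hTN : IsTNKernel fun x y : ℝ => if y ≤ x then g (x - y) else 0)

include hTN

theorem mul_add_add_le_of_isTNKernel {t s v : ℝ} (ht : 0 ≤ t) (hs : 0 ≤ s) (hv : 0 ≤ v) :
    g t * g (t + s + v) ≤ g (t + s) * g (t + v) := by
  rcases hs.eq_or_lt with rfl | hs
  · simp
  rcases hv.eq_or_lt with rfl | hv
  · simp [mul_comm]
  have hminor := hTN.mul_le_mul (lt_add_of_pos_right t hv) (neg_lt_zero.2 hs)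
  have h₁ : -s ≤ t := by linarith
  have h₂ : -s ≤ t + v := by linarith
  have h₃ : 0 ≤ t + v := by linarith
  simp only [if_pos ht, if_pos h₁, if_pos h₂, if_pos h₃] at hminor
  convert hminor using 3 <;> ring

variable (hg : AntitoneOn g (Ici 0)) (hpos : ∀ u, 0 ≤ u → 0 < g u)

include hg hpos

theorem mul_add_mul_le_of_isTNKernel {s v u : ℝ} (hs : 0 < s) (hv : 0 < v) (hu : 0 < u) :
    g s * g (v + u) + g (s + u) * g v ≤ g s * g v + g 0 * g (s + v) := by
  have hdet := hTN 3 ![0, u, u + v] ![-s, 0, u]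
    (by simp [Fin.strictMono_iff_lt_succ, Fin.forall_fin_two, hu, hv])
    (by simp [Fin.strictMono_iff_lt_succ, Fin.forall_fin_two, hu, hs])
  have h₁ : -s ≤ u := by linarith
  have h₂ : -s ≤ u + v := by linarith
  have h₃ : 0 ≤ u + v := by linarith
  simp only [det_fin_three, of_apply, cons_val, Left.neg_nonpos_iff, hs.le, ↓reduceIte,
    sub_neg_eq_add, zero_add, hu.le, sub_zero, le_add_iff_nonneg_right, hv.le,
    add_sub_cancel_left, le_refl, sub_self, h₃, h₁, h₂, hu.not_ge, zero_mul, add_zero] at hdet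
  -- Values of `g` beyond the jump are only bounded by monotonicity, which avoids taking limits.
  have hgu : g u ≤ g 0 := hg self_mem_Ici hu.le hu.le
  have hgsv : g (u + v + s) ≤ g (s + v) :=
    hg (mem_Ici.2 (by positivity)) (mem_Ici.2 (by positivity)) (by linarith)
  have hg0 := hpos 0 le_rfl
  have hgsgv := mul_pos (hpos s hs.le) (hpos v hv.le)
  rw [add_comm v u, add_comm s u]
  refine le_of_mul_le_mul_left ?_ hg0
  nlinarith [mul_le_mul_of_nonneg_left hgu hgsgv.le,
    mul_le_mul_of_nonneg_left hgsv (mul_pos hg0 hg0).le]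

theorem mul_eq_mul_of_isTNKernel {s v : ℝ} (hs : 0 ≤ s) (hv : 0 ≤ v) :
    g 0 * g (s + v) = g s * g v := by
  rcases hs.eq_or_lt with rfl | hs
  · simp
  rcases hv.eq_or_lt with rfl | hv
  · simp [mul_comm]
  refine le_antisymm (by simpa using mul_add_add_le_of_isTNKernel hTN le_rfl hs.le hv.le) ?_
  obtain ⟨t, htcont, htmax⟩ :=
    (hg.countable_not_continuousWithinAt.dense_compl ℝ).exists_gt (max s v)
  obtain ⟨hst, hvt⟩ := max_lt_iff.1 htmax
  have ht : 0 < t := hs.trans hst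
  have hcont : ContinuousAt g t := by
    by_contra h
    exact htcont ⟨ht.le, fun h' => h (h'.continuousAt (Ici_mem_nhds ht))⟩
  have hlim : Tendsto (fun u => 2 * (g s * g v) * g (t + u)) (𝓝[>] 0)
      (𝓝 (2 * (g s * g v) * g t)) := by
    refine Tendsto.const_mul _ (hcont.tendsto.comp ?_)
    refine tendsto_nhdsWithin_of_tendsto_nhds ?_
    simpa using (continuous_const_add t).tendsto 0
  have hbound : ∀ᶠ u in 𝓝[>] 0,
      2 * (g s * g v) * g (t + u) ≤ (g s * g v + g 0 * g (s + v)) * g t := by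
    filter_upwards [self_mem_nhdsWithin] with u hu
    have hdecay {r : ℝ} (hr : 0 < r) (hrt : r < t) : g r * g (t + u) ≤ g (r + u) * g t := by
      convert mul_add_add_le_of_isTNKernel hTN hr.le (le_of_lt hu) (sub_pos.2 hrt).le using 3 <;>
        ring
    have hminor := mul_add_mul_le_of_isTNKernel hTN hg hpos hs hv hu
    nlinarith [mul_le_mul_of_nonneg_left (hdecay hs hst) (hpos v hv.le).le,
      mul_le_mul_of_nonneg_left (hdecay hv hvt) (hpos s hs.le).le,
      mul_le_mul_of_nonneg_right hminor (hpos t ht.le).le]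
  have := le_of_mul_le_mul_right (le_of_tendsto hlim hbound) (hpos t ht.le)
  linarith

end JumpKernel

theorem exists_eq_const_add_mul_of_measurable {φ : ℝ → ℝ} (hφ : Measurable φ)
    (hadd : ∀ t s v, 0 ≤ s → 0 ≤ v → φ t + φ (t - s - v) = φ (t - s) + φ (t - v)) :
    ∃ m, ∀ t, φ t = φ 0 + m * t := by
  have hzero (s v : ℝ) : φ (s + v) + φ 0 = φ s + φ v := by
    rcases le_total 0 s with hs | hs <;> rcases le_total 0 v with hv | hv
    · simpa [add_comm] using hadd (s + v) s v hs hv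
    · simpa [add_comm] using (hadd s s (-v) hs (neg_nonneg.2 hv)).symm
    · simpa [add_comm] using (hadd v v (-s) hv (neg_nonneg.2 hs)).symm
    · simpa [add_comm] using hadd 0 (-s) (-v) (neg_nonneg.2 hs) (neg_nonneg.2 hv)
  let ψ : ℝ →+ ℝ := AddMonoidHom.mk' (fun t => φ t - φ 0) fun s v => by linarith [hzero s v]
  have hψ : Continuous ψ := Measure.AddMonoidHom.continuous_of_measurable ψ (hφ.sub_const _)
  refine ⟨ψ 1, fun t => ?_⟩
  have hlin : ψ t = t * ψ 1 := by simpa using map_real_smul ψ hψ t 1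
  have : ψ t = φ t - φ 0 := rfl
  linarith

/-- A function `F` preserves the class of Pólya frequency functions if post-composition with `F`
maps Pólya frequency functions to Pólya frequency functions. -/
def PreservesPolyaFrequency (F : ℝ → ℝ) : Prop :=
  ∀ Λ : ℝ → ℝ, IsPolyaFrequencyFunction Λ → IsPolyaFrequencyFunction (F ∘ Λ)

namespace PreservesPolyaFrequency

variable {F : ℝ → ℝ} (hF : PreservesPolyaFrequency F)

include hF

theorem comp_const_mul_exp_neg_abs {c : ℝ} (hc : 0 < c) :
    IsPolyaFrequencyFunction fun x => F (c * Real.exp (-|x|)) :=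
  hF _ (isPolyaFrequencyFunction_exp_neg_abs.const_mul hc)

theorem comp_const_mul_exp_neg_of_nonneg {c : ℝ} (hc : 0 < c) :
    IsPolyaFrequencyFunction fun x => F (c * if 0 ≤ x then Real.exp (-x) else 0) :=
  hF _ (isPolyaFrequencyFunction_exp_neg_of_nonneg.const_mul hc)

theorem monotoneOn : MonotoneOn F (Ioi 0) := by
  intro s hs t ht hst
  rcases hst.eq_or_lt with rfl | hst
  · rfl
  obtain ⟨-, hnonneg, -, hTN⟩ := hF.comp_const_mul_exp_neg_abs ht
  obtain ⟨h, hh, rfl⟩ : ∃ h, 0 < h ∧ t * Real.exp (-h) = s :=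
    ⟨Real.log (t / s), Real.log_pos ((one_lt_div hs).2 hst), by
      rw [Real.exp_neg, Real.exp_log (div_pos ht hs), inv_div, mul_div_cancel₀ _ (ne_of_gt ht)]⟩
  have hminor := hTN.mul_le_mul hh hh
  simp only [zero_sub, sub_zero, sub_self, abs_neg, abs_of_pos hh, abs_zero, neg_zero,
    Real.exp_zero, mul_one] at hminor
  exact nonneg_le_nonneg_of_sq_le_sq (by simpa using hnonneg 0) hminor

theorem pos {t : ℝ} (ht : 0 < t) : 0 < F t := by
  obtain ⟨-, hnonneg, ⟨a, -, -, ha, -⟩, -⟩ := hF.comp_const_mul_exp_neg_abs ht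
  have hle : t * Real.exp (-|a|) ≤ t := mul_le_of_le_one_right ht.le (by simp)
  exact ((hnonneg a).lt_of_ne' ha).trans_le
    (hF.monotoneOn (mul_pos ht (Real.exp_pos _)) ht hle)

theorem map_zero : F 0 = 0 := by
  have hint : IntegrableOn (fun x => F (1 * if 0 ≤ x then Real.exp (-x) else 0)) (Iio (0 : ℝ)) :=
    (hF.comp_const_mul_exp_neg_of_nonneg one_pos).1.integrableOn
  have hconst : IntegrableOn (fun _ => F 0) (Iio (0 : ℝ)) :=
    hint.congr_fun (fun x hx => by simp [(mem_Iio.1 hx).not_ge]) measurableSet_Iio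
  simpa [integrableOn_const_iff] using hconst

theorem mul_exp_sub_sub (t : ℝ) {s v : ℝ} (hs : 0 ≤ s) (hv : 0 ≤ v) :
    F (Real.exp t) * F (Real.exp (t - s - v)) = F (Real.exp (t - s)) * F (Real.exp (t - v)) := by
  obtain ⟨-, -, -, hTN⟩ := hF.comp_const_mul_exp_neg_of_nonneg (Real.exp_pos t)
  have hjump : IsTNKernel fun x y : ℝ => if y ≤ x then F (Real.exp (t - (x - y))) else 0 := by
    convert hTN using 3 with x y
    simp only [sub_nonneg]
    split_ifs
    · rw [← Real.exp_add, sub_eq_add_neg]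
    · rw [mul_zero, hF.map_zero]
  have hanti : AntitoneOn (fun u => F (Real.exp (t - u))) (Ici 0) := fun u _ w _ huw =>
    hF.monotoneOn (Real.exp_pos _) (Real.exp_pos _) (Real.exp_le_exp.2 (by linarith))
  simpa [sub_sub] using
    mul_eq_mul_of_isTNKernel hjump hanti (fun u _ => hF.pos (Real.exp_pos _)) hs hv

theorem exists_eq_const_mul_rpow : ∃ C α : ℝ, 0 < C ∧ ∀ x, 0 < x → F x = C * x ^ α := by
  have hmono : Monotone fun t => Real.log (F (Real.exp t)) := fun s t hst =>
    Real.log_le_log (hF.pos (Real.exp_pos s))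
      (hF.monotoneOn (Real.exp_pos s) (Real.exp_pos t) (Real.exp_le_exp.2 hst))
  have hne (t : ℝ) : F (Real.exp t) ≠ 0 := (hF.pos (Real.exp_pos t)).ne'
  obtain ⟨α, hα⟩ := exists_eq_const_add_mul_of_measurable hmono.measurable
    fun t s v hs hv => by
      rw [← Real.log_mul (hne _) (hne _), ← Real.log_mul (hne _) (hne _),
        hF.mul_exp_sub_sub t hs hv]
  refine ⟨F 1, α, hF.pos one_pos, fun x hx => ?_⟩
  have hlog := hα (Real.log x)
  rw [Real.exp_log hx, Real.exp_zero] at hlog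
  rw [← Real.exp_log (hF.pos hx), hlog, Real.exp_add, Real.exp_log (hF.pos one_pos),
    Real.rpow_def_of_pos hx, mul_comm α]

theorem exponent_ne_zero {C α : ℝ} (hC : 0 < C) (hpow : ∀ x, 0 < x → F x = C * x ^ α) : α ≠ 0 := by
  rintro rfl
  have hint : IntegrableOn (fun x => F (1 * if 0 ≤ x then Real.exp (-x) else 0)) (Ioi (0 : ℝ)) :=
    (hF.comp_const_mul_exp_neg_of_nonneg one_pos).1.integrableOn
  have hconst : IntegrableOn (fun _ => C) (Ioi (0 : ℝ)) :=
    hint.congr_fun (fun x hx => by simp [(mem_Ioi.1 hx).le, hpow _ (Real.exp_pos _)])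
      measurableSet_Ioi
  simp [integrableOn_const_iff, hC.ne'] at hconst

end PreservesPolyaFrequency

section TaylorDeterminant

variable {n : ℕ}

theorem det_mul_diagonal_mul_add {K : Type*} [Field K] {A B : Matrix (Fin (n + 1)) (Fin (n + 1)) K}
    (hA : IsUnit A.det) (hB : IsUnit B.det) (c : Fin (n + 1) → K)
    (S : Matrix (Fin (n + 1)) (Fin (n + 1)) K) (q : K) :
    (A * diagonal (fun k => c k * q ^ (k : ℕ)) * B + q ^ n • S).det =
      q ^ (n + 1).choose 2 * (A.det *
        (diagonal c + A⁻¹ * S * B⁻¹ * diagonal fun k : Fin (n + 1) => q ^ (n - (k : ℕ))).det *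
        B.det) := by
  have hscale : diagonal (fun k : Fin (n + 1) => q ^ (n - (k : ℕ))) *
      diagonal (fun k : Fin (n + 1) => q ^ (k : ℕ)) = q ^ n • 1 := by
    rw [diagonal_mul_diagonal, smul_one_eq_diagonal]
    congr 1 with k
    rw [← pow_add, Nat.sub_add_cancel k.is_le]
  have hfactor : A * diagonal (fun k => c k * q ^ (k : ℕ)) * B + q ^ n • S =
      A * (diagonal c + A⁻¹ * S * B⁻¹ * diagonal fun k : Fin (n + 1) => q ^ (n - (k : ℕ))) *
        diagonal (fun k : Fin (n + 1) => q ^ (k : ℕ)) * B := by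
    rw [mul_add, add_mul, add_mul, ← diagonal_mul_diagonal', ← Matrix.mul_assoc A]
    congr 1
    rw [Matrix.mul_assoc A, Matrix.mul_assoc (A⁻¹ * S * B⁻¹), hscale, Matrix.mul_smul,
      Matrix.mul_one, Matrix.mul_smul, Matrix.smul_mul, Matrix.mul_assoc A⁻¹,
      mul_nonsing_inv_cancel_left _ _ hA, nonsing_inv_mul_cancel_right _ _ hB]
  rw [hfactor, det_mul, det_mul, det_mul, det_diagonal, Finset.prod_pow_eq_pow_sum,
    Fin.sum_univ_eq_sum_range fun k => k, Finset.sum_range_id, ← Nat.choose_two_right]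
  ring

theorem tendsto_det_comp_mul_div {f : ℝ → ℝ} {c : ℕ → ℝ}
    (hf : (fun y => f y - ∑ k ∈ Finset.range (n + 1), c k * y ^ k) =o[𝓝 0] fun y => y ^ n)
    {a b : Fin (n + 1) → ℝ} (ha : Function.Injective a) (hb : Function.Injective b) :
    Tendsto (fun q => (of fun i j => f (q * (a i * b j))).det / q ^ (n + 1).choose 2) (𝓝[≠] 0)
      (𝓝 ((vandermonde a).det * (∏ k : Fin (n + 1), c k) * (vandermonde b).det)) := by
  let rem (q : ℝ) : Matrix (Fin (n + 1)) (Fin (n + 1)) ℝ := of fun i j =>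
    (f (q * (a i * b j)) - ∑ k ∈ Finset.range (n + 1), c k * (q * (a i * b j)) ^ k) / q ^ n
  have hrem : Tendsto rem (𝓝[≠] 0) (𝓝 0) := by
    refine tendsto_pi_nhds.2 fun i => tendsto_pi_nhds.2 fun j => ?_
    have hmul : Tendsto (fun q : ℝ => q * (a i * b j)) (𝓝 0) (𝓝 0) := by
      simpa using (continuous_mul_const (a i * b j)).tendsto 0
    refine Tendsto.mono_left ((hf.comp_tendsto hmul).trans_isBigO ?_).tendsto_div_nhds_zero
      nhdsWithin_le_nhds
    simpa only [Function.comp_def, mul_pow, mul_comm (_ ^ n) (a i ^ n * b j ^ n)] using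
      (Asymptotics.isBigO_refl (fun q : ℝ => q ^ n) (𝓝 0)).const_mul_left (a i ^ n * b j ^ n)
  have hA : (vandermonde a).det ≠ 0 := det_vandermonde_ne_zero_iff.2 ha
  have hB : (vandermonde b)ᵀ.det ≠ 0 := by rwa [det_transpose, det_vandermonde_ne_zero_iff]
  have hfactor : ∀ᶠ q in 𝓝[≠] 0, (vandermonde a).det *
      (diagonal (fun k : Fin (n + 1) => c k) + (vandermonde a)⁻¹ * rem q * (vandermonde b)ᵀ⁻¹ *
        diagonal fun k : Fin (n + 1) => q ^ (n - (k : ℕ))).det * (vandermonde b)ᵀ.det =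
      (of fun i j => f (q * (a i * b j))).det / q ^ (n + 1).choose 2 := by
    filter_upwards [self_mem_nhdsWithin] with q hq
    rw [eq_div_iff (pow_ne_zero _ hq), mul_comm,
      ← det_mul_diagonal_mul_add hA.isUnit hB.isUnit]
    congr 1 with i j
    rw [Matrix.add_apply, Matrix.mul_apply]
    simp only [rem, Matrix.smul_apply, of_apply, smul_eq_mul, mul_div_cancel₀ _ (pow_ne_zero n hq),
      mul_diagonal, transpose_apply, vandermonde_apply, Finset.sum_range]
    rw [← add_sub_assoc, add_sub_right_comm, add_eq_right, sub_eq_zero]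
    exact Finset.sum_congr rfl fun k _ => by ring
  refine Tendsto.congr' hfactor ?_
  have hdiag : Tendsto (fun q : ℝ => diagonal fun k : Fin (n + 1) => q ^ (n - (k : ℕ))) (𝓝[≠] 0)
      (𝓝 (diagonal fun k => 0 ^ (n - (k : ℕ)))) :=
    (Continuous.tendsto (by fun_prop) 0).mono_left nhdsWithin_le_nhds
  have hlim := ((hrem.const_mul (vandermonde a)⁻¹).mul_const (vandermonde b)ᵀ⁻¹).mul hdiag
  have hdet := (continuous_id.matrix_det.tendsto _).comp
    (hlim.const_add (diagonal fun k : Fin (n + 1) => c k))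
  simpa [Function.comp_def] using
    (hdet.const_mul (vandermonde a).det).mul_const (vandermonde b)ᵀ.det

end TaylorDeterminant

theorem det_vandermonde_mul_det_vandermonde_pos {R : Type*} [CommRing R] [LinearOrder R]
    [IsStrictOrderedRing R] {n : ℕ} {a b : Fin n → R} (ha : StrictAnti a) (hb : StrictAnti b) :
    0 < (vandermonde a).det * (vandermonde b).det := by
  simp only [det_vandermonde, ← Finset.prod_mul_distrib]
  exact Finset.prod_pos fun i _ => Finset.prod_pos fun j hj =>
    have hij : i < j := Finset.mem_Ioi.1 hj
    mul_pos_of_neg_of_neg (sub_neg.2 (ha hij)) (sub_neg.2 (hb hij))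

theorem det_eq_add_of_eq_off_corner {R : Type*} [CommRing R] {n : ℕ}
    {A B : Matrix (Fin (n + 1)) (Fin (n + 1)) R}
    (h : ∀ i j, (i, j) ≠ (0, Fin.last n) → A i j = B i j) :
    A.det = B.det + (-1) ^ n * (A 0 (Fin.last n) - B 0 (Fin.last n)) *
      (B.submatrix Fin.succ Fin.castSucc).det := by
  have hsucc (j : Fin (n + 1)) :
      A.submatrix Fin.succ j.succAbove = B.submatrix Fin.succ j.succAbove := by
    ext i k
    exact h _ _ (by simp)
  have hrow (j : Fin n) : A 0 j.castSucc = B 0 j.castSucc := h _ _ (by simp [Fin.castSucc_ne_last])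
  rw [det_succ_row_zero A, det_succ_row_zero B, Fin.sum_univ_castSucc, Fin.sum_univ_castSucc]
  simp only [hsucc, hrow, Fin.val_last]
  rw [Fin.succAbove_last]
  ring

theorem one_add_rpow_sub_sum_isLittleO (α : ℝ) (n : ℕ) :
    (fun y : ℝ => (1 + y) ^ α - ∑ k ∈ Finset.range (n + 1), Ring.choose α k * y ^ k) =o[𝓝 0]
      fun y => y ^ n := by
  have hO := (Real.one_add_rpow_hasFPowerSeriesAt_zero (a := α)).isBigO_sub_partialSum_pow (n + 1)
  simp only [zero_add, FormalMultilinearSeries.partialSum, binomialSeries_apply, List.ofFn_const,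
    List.prod_replicate, smul_eq_mul, ← norm_pow] at hO
  exact hO.of_norm_right.trans_isLittleO (Asymptotics.isLittleO_pow_pow n.lt_succ_self)

theorem exists_pos_tendsto_det_one_sub_mul_exp_rpow_div (α : ℝ) {n : ℕ} {x y : Fin (n + 1) → ℝ}
    (hx : StrictMono x) (hy : StrictMono y) :
    ∃ V > 0, Tendsto (fun q => (of fun i j => (1 - q * Real.exp (-(x i - y j))) ^ α).det /
      q ^ (n + 1).choose 2) (𝓝[>] 0) (𝓝 (V * ∏ k : Fin (n + 1), Ring.choose α (k : ℕ))) := by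
  have ha : StrictAnti fun i => Real.exp (-x i) := fun i j hij =>
    Real.exp_lt_exp.2 (neg_lt_neg (hx hij))
  have hb : StrictAnti fun j => -Real.exp (y j) := fun i j hij =>
    neg_lt_neg (Real.exp_lt_exp.2 (hy hij))
  refine ⟨_, det_vandermonde_mul_det_vandermonde_pos ha hb, ?_⟩
  rw [mul_right_comm]
  convert (tendsto_det_comp_mul_div (one_add_rpow_sub_sum_isLittleO α n) ha.injective
    hb.injective).mono_left (nhdsGT_le_nhdsNE 0) using 9 with q i j
  rw [mul_neg, mul_neg, ← Real.exp_add, neg_sub', sub_neg_eq_add, ← sub_eq_add_neg]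

theorem ring_choose_two {K : Type*} [Field K] [CharZero K] (a : K) :
    Ring.choose a 2 = a * (a - 1) / 2 := by
  rw [Ring.choose_eq_smul, descPochhammer_succ_right, descPochhammer_one]
  simp only [Nat.factorial_two, Nat.cast_ofNat, Nat.cast_one, Polynomial.smeval_mul,
    Polynomial.smeval_X, pow_one, Polynomial.smeval_sub, Polynomial.smeval_one, pow_zero, one_smul,
    smul_eq_mul]
  ring

theorem hasDerivAt_expProbe_of_nonpos {x : ℝ} (hx : x ≤ 0) :
    HasDerivAt (fun q => expProbe q x) (x - 1) 0 := by
  simp only [expProbe_of_nonpos hx]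
  have hid := hasDerivAt_id (0 : ℝ)
  convert! (hid.const_sub 1).mul (((hid.div (hid.const_sub 1) (by simp)).mul_const x).exp) using 1
  simp [neg_add_eq_sub]

theorem hasDerivAt_expProbe_rpow_sub {x : ℝ} (hx : x ≤ 0) (α : ℝ) :
    HasDerivAt (fun q => expProbe q x ^ α - (1 - q * Real.exp (-x)) ^ α)
      (α * (Real.exp (-x) - (1 - x))) 0 := by
  have hlin : HasDerivAt (fun q => 1 - q * Real.exp (-x)) (-Real.exp (-x)) 0 := by
    simpa using ((hasDerivAt_id (0 : ℝ)).mul_const (Real.exp (-x))).const_sub 1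
  have hzero : expProbe 0 x = 1 := by simp [expProbe]
  convert! ((hasDerivAt_expProbe_of_nonpos hx).rpow_const (p := α) (by simp [hzero])).sub
    (hlin.rpow_const (p := α) (by simp)) using 1
  simp only [hzero, zero_mul, sub_zero, Real.one_rpow]
  ring

theorem tendsto_expProbe_rpow_sub_div {x : ℝ} (hx : x ≤ 0) (α : ℝ) :
    Tendsto (fun q => (expProbe q x ^ α - (1 - q * Real.exp (-x)) ^ α) / q) (𝓝[>] 0)
      (𝓝 (α * (Real.exp (-x) - (1 - x)))) := by
  simpa [expProbe, div_eq_inv_mul] using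
    (hasDerivAt_expProbe_rpow_sub hx α).tendsto_slope_zero_right

theorem exists_pos_tendsto_det_expProbe_rpow_div (α : ℝ) {n : ℕ} (hn : n ≠ 0)
    {x y : Fin (n + 2) → ℝ} (hx : StrictMono x) (hy : StrictMono y)
    (hxy : ∀ i j, (i, j) ≠ (0, Fin.last _) → 0 ≤ x i - y j) (hcorner : x 0 - y (Fin.last _) ≤ 0) :
    ∃ V > 0, Tendsto (fun q => (of fun i j => expProbe q (x i - y j) ^ α).det /
      q ^ ((n + 1).choose 2 + 1)) (𝓝[>] 0)
      (𝓝 ((-1) ^ (n + 1) * (α * (Real.exp (-(x 0 - y (Fin.last _))) -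
        (1 - (x 0 - y (Fin.last _))))) * (V * ∏ k : Fin (n + 1), Ring.choose α (k : ℕ)))) := by
  obtain ⟨W, -, hfull⟩ := exists_pos_tendsto_det_one_sub_mul_exp_rpow_div α hx hy
  obtain ⟨V, hV, hminor⟩ := exists_pos_tendsto_det_one_sub_mul_exp_rpow_div α
    (hx.comp Fin.strictMono_succ) (hy.comp Fin.strictMono_castSucc)
  refine ⟨V, hV, ?_⟩
  have hpow : Tendsto (fun q : ℝ => q ^ n) (𝓝[>] 0) (𝓝 (0 ^ n)) :=
    ((continuous_pow n).tendsto 0).mono_left nhdsWithin_le_nhds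
  have hlim := (hfull.mul hpow).add
    (((tendsto_expProbe_rpow_sub_div hcorner α).const_mul ((-1) ^ (n + 1))).mul hminor)
  rw [zero_pow hn, mul_zero, zero_add] at hlim
  refine hlim.congr' ?_
  filter_upwards [self_mem_nhdsWithin] with q hq
  have hexp : (n + 1 + 1).choose 2 = (n + 1).choose 2 + 1 + n := by
    rw [Nat.choose_succ_succ', Nat.choose_one_right]
    ring
  have hq : q ≠ 0 := (mem_Ioi.1 hq).ne'
  rw [det_eq_add_of_eq_off_corner (A := of fun i j => expProbe q (x i - y j) ^ α)
    (B := of fun i j => (1 - q * Real.exp (-(x i - y j))) ^ α) fun i j hij => by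
      simp only [of_apply, expProbe_of_nonneg (hxy i j hij)]]
  simp only [of_apply, Function.comp_apply, submatrix, hexp, pow_add, pow_one]
  field_simp

theorem prod_choose_fin_three (α : ℝ) :
    ∏ k : Fin 3, Ring.choose α (k : ℕ) = α ^ 2 * (α - 1) / 2 := by
  simp only [Fin.prod_univ_three, Fin.val_zero, Fin.val_one, Fin.val_two, Ring.choose_zero_right,
    Ring.choose_one_right, ring_choose_two]
  ring

section Exponent

variable {α : ℝ} (hTN : ∀ q ∈ Ioo (0 : ℝ) 1, IsTNKernel fun x y : ℝ => expProbe q (x - y) ^ α)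

include hTN

theorem one_le_of_isTNKernel_expProbe_rpow (hα : α ≠ 0) : 1 ≤ α := by
  let x : Fin 3 → ℝ := fun i => (i : ℕ) + 2
  let y : Fin 3 → ℝ := fun j => (j : ℕ)
  have hx : StrictMono x := fun i j hij => by simpa [x] using hij
  have hy : StrictMono y := fun i j hij => by simpa [y] using hij
  have hxy (i j : Fin 3) : 0 ≤ x i - y j := by
    have : (j : ℕ) ≤ i + 2 := by omega
    simpa [x, y] using Nat.cast_le (α := ℝ).2 this
  obtain ⟨V, hV, hlim⟩ := exists_pos_tendsto_det_one_sub_mul_exp_rpow_div α hx hy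
  have hnonneg : 0 ≤ V * (α ^ 2 * (α - 1) / 2) := by
    rw [← prod_choose_fin_three]
    refine ge_of_tendsto hlim ?_
    filter_upwards [Ioo_mem_nhdsGT one_pos] with q hq
    refine div_nonneg ?_ (pow_nonneg hq.1.le _)
    simpa only [expProbe_of_nonneg (hxy _ _)] using hTN q hq 3 x y hx hy
  have hα2 : 0 < α ^ 2 := by positivity
  by_contra! hlt
  nlinarith [mul_pos (mul_pos hV hα2) (sub_pos.2 hlt)]

-- The nodes place the corner difference `x 0 - y 3`, and no other, to the left of the kink of the
-- probe. Its discrepancy, of order `q`, from the analytic kernel contributes at order `q ^ 4` and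
-- dominates the determinant of that kernel, which is of order `q ^ 6`.
theorem le_one_of_isTNKernel_expProbe_rpow (hα : 0 < α) : α ≤ 1 := by
  let x : Fin 4 → ℝ := fun i => (i : ℕ)
  let y : Fin 4 → ℝ := fun j => (j : ℕ) - 2
  have hx : StrictMono x := fun i j hij => by simpa [x] using hij
  have hy : StrictMono y := fun i j hij => by simpa [y] using hij
  have hxy (i j : Fin 4) (hij : (i, j) ≠ (0, Fin.last 3)) : 0 ≤ x i - y j := by
    have : (j : ℕ) ≤ i + 2 := by
      simp only [ne_eq, Prod.mk.injEq, Fin.ext_iff, Fin.val_zero, Fin.val_last] at hij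
      omega
    simpa [x, y] using Nat.cast_le (α := ℝ).2 this
  have hcorner : x 0 - y (Fin.last 3) = -1 := by norm_num [x, y]
  obtain ⟨V, hV, hlim⟩ := exists_pos_tendsto_det_expProbe_rpow_div α two_ne_zero hx hy hxy
    (by norm_num [hcorner])
  rw [hcorner, prod_choose_fin_three] at hlim
  have hnonneg : 0 ≤ (-1) ^ (2 + 1) * (α * (Real.exp (- -1) - (1 - -1))) *
      (V * (α ^ 2 * (α - 1) / 2)) := by
    refine ge_of_tendsto hlim ?_
    filter_upwards [Ioo_mem_nhdsGT one_pos] with q hq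
    exact div_nonneg (hTN q hq 4 x y hx hy) (pow_nonneg hq.1.le _)
  have hjump : 0 < Real.exp (- -1) - (1 - -1) := by
    have := Real.add_one_lt_exp (neg_ne_zero.2 (neg_ne_zero.2 (one_ne_zero (α := ℝ))))
    linarith
  by_contra! hlt
  have : 0 < α - 1 := sub_pos.2 hlt
  have hpos : 0 < α * (Real.exp (- -1) - (1 - -1)) * (V * (α ^ 2 * (α - 1) / 2)) := by positivity
  linarith

end Exponent

namespace PreservesPolyaFrequency

variable {F : ℝ → ℝ} (hF : PreservesPolyaFrequency F)

include hF

theorem isTNKernel_expProbe_rpow {C α : ℝ} (hC : 0 < C) (hpow : ∀ x, 0 < x → F x = C * x ^ α)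
    {q : ℝ} (hq : q ∈ Ioo 0 1) : IsTNKernel fun x y : ℝ => expProbe q (x - y) ^ α := by
  obtain ⟨-, -, -, hTN⟩ := hF _ (isPolyaFrequencyFunction_exp_mul_expProbe hq)
  convert hTN.exp_mul_mul (inv_nonneg.2 hC.le) (α * (q / (1 - q) / 2)) using 3 with x y
  have hprobe := expProbe_pos hq (x - y)
  rw [Function.comp_apply, hpow _ (mul_pos (Real.exp_pos _) hprobe),
    Real.mul_rpow (Real.exp_pos _).le hprobe.le, ← Real.exp_mul, mul_mul_mul_comm,
    inv_mul_cancel₀ hC.ne', one_mul, ← mul_assoc, ← Real.exp_add]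
  have htilt : α * (q / (1 - q) / 2) * (x - y) + -(q / (1 - q) / 2) * (x - y) * α = 0 := by ring
  rw [htilt, Real.exp_zero, one_mul]

theorem exponent_eq_one {C α : ℝ} (hC : 0 < C) (hpow : ∀ x, 0 < x → F x = C * x ^ α) : α = 1 := by
  have hTN (q : ℝ) (hq : q ∈ Ioo 0 1) := hF.isTNKernel_expProbe_rpow hC hpow hq
  have hle := one_le_of_isTNKernel_expProbe_rpow hTN (hF.exponent_ne_zero hC hpow)
  exact le_antisymm (le_one_of_isTNKernel_expProbe_rpow hTN (one_pos.trans_le hle)) hle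

end PreservesPolyaFrequency

theorem stmt_14 (F : ℝ → ℝ) (hF : ∀ x : ℝ, 0 ≤ x → 0 ≤ F x) :
    (∀ Λ : ℝ → ℝ, IsPolyaFrequencyFunction Λ →
        IsPolyaFrequencyFunction (F ∘ Λ)) ↔
      ∃ c : ℝ, 0 < c ∧ ∀ x : ℝ, 0 ≤ x → F x = c * x := by
  refine ⟨fun hpres : PreservesPolyaFrequency F => ?_, fun ⟨c, hc, hlin⟩ Λ hΛ => ?_⟩
  · obtain ⟨C, α, hC, hpow⟩ := hpres.exists_eq_const_mul_rpow
    obtain rfl := hpres.exponent_eq_one hC hpow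
    refine ⟨C, hC, fun x hx => ?_⟩
    rcases hx.eq_or_lt with rfl | hx
    · rw [hpres.map_zero, mul_zero]
    · rw [hpow x hx, Real.rpow_one]
  · have hcomp : F ∘ Λ = fun x => c * Λ x := funext fun x => hlin _ (hΛ.2.1 x)
    exact hcomp ▸ hΛ.const_mul hc
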